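/- Let n ≥ 3, k ≥ 1, and let three robots have pairwise distinct ID bit-strings b₁, b₂, b₃ : Fin k → Bool and arbitrary chiralities s₁, s₂, s₃ : Bool. The robots execute Stage 1 on the dynamic ring ZMod n from arbitrary start nodes: rounds are grouped into consecutive phases where phase t consists of 2^t rounds (phase t occupies rounds 2^t − 1 through 2^{t+1} − 2), and in every round of phase t robot j attempts to move clockwise if xor s_j (b_j (t mod k)) = false and counterclockwise otherwise. Then for every adversary e : ℕ → Option (ZMod n), some two of the three robots meet within n + n·2^k rounds (they occupy the same node at some time t ≤ n + n·2^k, or cross the same edge in opposite directions in some round completed by time n + n·2^k). -/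

import Mathlib

/-- One round of movement on the dynamic ring `ZMod n`: a robot at node `p` attempting to
move clockwise (`dir = true`) moves to `p + 1` unless the adversary removed edge `p`;
attempting counterclockwise (`dir = false`) it moves to `p - 1` unless edge `p - 1` was
removed. -/
def ringStep (n : ℕ) (e : Option (ZMod n)) (dir : Bool) (p : ZMod n) : ZMod n :=
  if dir then (if e ≠ some p then p + 1 else p)
  else (if e ≠ some (p - 1) then p - 1 else p)

/-- Position of a robot with start node `v`, per-round attempted directions `d` and
adversary `e`. -/
def ringPos (n : ℕ) (e : ℕ → Option (ZMod n)) (d : ℕ → Bool) (v : ZMod n) : ℕ → ZMod n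
  | 0 => v
  | t + 1 => ringStep n (e t) (d t) (ringPos n e d v t)

/-- Two robots with position functions `p q` meet within `R` rounds: same node at some
time `t ≤ R`, or they cross the same edge in opposite directions in a round completed by
time `R`. -/
def meetsWithin (n R : ℕ) (p q : ℕ → ZMod n) : Prop :=
  (∃ t ≤ R, p t = q t) ∨
  (∃ t, t + 1 ≤ R ∧ p (t + 1) = q t ∧ q (t + 1) = p t ∧ p t ≠ q t)


/-- The phase containing round `r` in Stage 1: phase `t` consists of the `2^t` rounds
`2^t - 1, …, 2^(t+1) - 2`, so the phase of round `r` is `⌊log₂ (r + 1)⌋`. -/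
def stage1Phase (r : ℕ) : ℕ := Nat.log 2 (r + 1)

/-- Direction attempted in round `r` by a robot with ID bit-string `b : Fin k → Bool` and
chirality `s`: clockwise (`true`) iff `xor s (b (phase r mod k)) = false`. -/
def stage1Dir (k : ℕ) (hk : 0 < k) (b : Fin k → Bool) (s : Bool) (r : ℕ) : Bool :=
  !(xor s (b ⟨stage1Phase r % k, Nat.mod_lt _ hk⟩))


lemma ringStep_neg (n : ℕ) (e : Option (ZMod n)) (d : Bool) (p : ZMod n) :
    ringStep n (e.map (fun i => -i - 1)) (!d) (-p) = - ringStep n e d p := by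
  have h1 : ∀ x y : ZMod n, (-x - 1 = -y - 1) ↔ x = y := by
    intro x y
    constructor
    · intro h
      linear_combination -h
    · rintro rfl
      rfl
  have h2 : ∀ x y : ZMod n, (-x - 1 = -y) ↔ x = y - 1 := by
    intro x y
    constructor
    · intro h
      linear_combination -h
    · rintro rfl
      ring
  cases d <;> cases e <;> simp [ringStep, h1, h2] <;> (try split_ifs) <;> ring

lemma val_sub_eq (n : ℕ) [NeZero n] (X Y : ZMod n) (a : ℕ) (ha : a < n) (h : Y - X = (a : ZMod n)) :
    (Y - X).val = a := by
  rw [h, ZMod.val_natCast_of_lt ha]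

lemma natCast_inj_lt (n : ℕ) [NeZero n] (a b : ℕ) (ha : a < n) (hb : b < n)
    (h : (a : ZMod n) = b) : a = b := by
  have := congrArg ZMod.val h
  rwa [ZMod.val_natCast_of_lt ha, ZMod.val_natCast_of_lt hb] at this

lemma step_true (n : ℕ) (hn : 3 ≤ n) (e : Option (ZMod n)) (A B C A' B' C' : ZMod n)
    (hA : A' = ringStep n e true A) (hB : B' = ringStep n e true B)
    (hC : C' = ringStep n e false C) (h1 : 0 < (C - A).val) (h2 : (C - A).val < (C - B).val) :
    A' = B' ∨ A' = C' ∨ (A' = C ∧ C' = A ∧ A ≠ C) ∨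
    (0 < (C' - A').val ∧ (C' - A').val < (C' - B').val ∧ (C' - B').val < (C - B).val) := by
  have : NeZero n := ⟨by omega⟩
  have hb := ZMod.val_lt (C - B)
  obtain ⟨a, ha⟩ : ∃ a, a = (C - A).val := ⟨_, rfl⟩
  obtain ⟨b, hbb⟩ : ∃ b, b = (C - B).val := ⟨_, rfl⟩
  have hCA : C - A = (a : ZMod n) := by rw [ha, ZMod.natCast_zmod_val]
  have hCB : C - B = (b : ZMod n) := by rw [hbb, ZMod.natCast_zmod_val]
  rw [← ha] at h1 h2
  rw [← hbb] at h2 hb ⊢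
  have key : ∃ α β γ : ℕ, α ≤ 1 ∧ β ≤ 1 ∧ γ ≤ 1 ∧ 1 ≤ β + γ ∧ A' = A + α ∧ B' = B + β ∧
      C' = C - γ := by
    have hα : ∃ α : ℕ, α ≤ 1 ∧ A' = A + α := by
      rw [hA]; simp only [ringStep]
      by_cases h : e = some A
      · exact ⟨0, by simp [h]⟩
      · exact ⟨1, by simp [h]⟩
    obtain ⟨α, hα, hA'⟩ := hα
    by_cases hB1 : e = some B
    · have hne : e ≠ some (C - 1) := by
        rw [hB1]
        intro h
        have h : B = C - 1 := by simpa using h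
        have : (b : ZMod n) = (1 : ℕ) := by rw [← hCB, h]; simp
        have := natCast_inj_lt n b 1 (by omega) (by omega) this
        omega
      refine ⟨α, 0, 1, hα, by omega, by omega, by omega, hA', ?_, ?_⟩
      · rw [hB]; simp [ringStep, hB1]
      · rw [hC]; simp [ringStep, hne]
    · have hγ : ∃ γ : ℕ, γ ≤ 1 ∧ C' = C - γ := by
        rw [hC]; simp only [ringStep]
        by_cases h : e = some (C - 1)
        · exact ⟨0, by simp [h]⟩
        · exact ⟨1, by simp [h]⟩
      obtain ⟨γ, hγ, hC'⟩ := hγ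
      refine ⟨α, 1, γ, hα, by omega, by omega, by omega, hA', ?_, hC'⟩
      rw [hB]; simp [ringStep, hB1]
  obtain ⟨α, β, γ, hα, hβ, hγ, hβγ, rfl, rfl, rfl⟩ := key
  clear hA hB hC
  by_cases c1 : a + 1 = α + γ
  · obtain ⟨rfl, rfl, rfl⟩ : a = 1 ∧ α = 1 ∧ γ = 1 := by omega
    right; right; left
    refine ⟨by linear_combination -hCA, by linear_combination hCA, ?_⟩
    rintro rfl
    simp at ha
  by_cases c2 : a = α + γ
  · right; left
    rw [c2] at hCA
    push_cast at hCA
    linear_combination -hCA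
  by_cases c3 : b + α = a + β
  · left
    have : (b : ZMod n) + α = a + β := by exact_mod_cast congrArg (Nat.cast : ℕ → ZMod n) c3
    linear_combination this - hCA + hCB
  right; right; right
  have e1 : (C - (γ : ZMod n) - (A + α)).val = a - (α + γ) := by
    apply val_sub_eq _ _ _ _ (by omega)
    rw [Nat.cast_sub (by omega)]
    push_cast
    linear_combination hCA
  have e2 : (C - (γ : ZMod n) - (B + β)).val = b - (β + γ) := by
    apply val_sub_eq _ _ _ _ (by omega)
    rw [Nat.cast_sub (by omega)]
    push_cast
    linear_combination hCB
  rw [e1, e2]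
  omega

lemma core_lt (n : ℕ) (hn : 3 ≤ n) (R t0 : ℕ) (e : ℕ → Option (ZMod n)) (p q r : ℕ → ZMod n)
    (hR : t0 + (n - 2) ≤ R)
    (hp : ∀ t, t0 ≤ t → t < t0 + (n - 2) → p (t + 1) = ringStep n (e t) true (p t))
    (hq : ∀ t, t0 ≤ t → t < t0 + (n - 2) → q (t + 1) = ringStep n (e t) true (q t))
    (hr : ∀ t, t0 ≤ t → t < t0 + (n - 2) → r (t + 1) = ringStep n (e t) false (r t))
    (h1 : 0 < (r t0 - p t0).val) (h2 : (r t0 - p t0).val < (r t0 - q t0).val) :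
    meetsWithin n R p q ∨ meetsWithin n R p r ∨ meetsWithin n R q r := by
  have : NeZero n := ⟨by omega⟩
  by_contra hcon
  have main : ∀ m, m ≤ n - 2 → 0 < (r (t0 + m) - p (t0 + m)).val ∧
      (r (t0 + m) - p (t0 + m)).val < (r (t0 + m) - q (t0 + m)).val ∧
      (r (t0 + m) - q (t0 + m)).val + m ≤ (r t0 - q t0).val := by
    intro m
    induction m with
    | zero => intro _; exact ⟨h1, h2, le_refl _⟩
    | succ m ih =>
      intro hm
      obtain ⟨i1, i2, i3⟩ := ih (by omega)
      rcases step_true n hn (e (t0 + m)) _ _ _ _ _ _ (hp (t0 + m) (by omega) (by omega))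
        (hq (t0 + m) (by omega) (by omega)) (hr (t0 + m) (by omega) (by omega)) i1 i2 with
        h | h | ⟨h, h', h''⟩ | ⟨j1, j2, j3⟩
      · exact absurd (Or.inl (Or.inl ⟨t0 + m + 1, by omega, h⟩)) hcon
      · exact absurd (Or.inr (Or.inl (Or.inl ⟨t0 + m + 1, by omega, h⟩))) hcon
      · exact absurd (Or.inr (Or.inl (Or.inr ⟨t0 + m, by omega, h, h', h''⟩))) hcon
      · exact ⟨j1, j2, by rw [← add_assoc t0 m 1]; omega⟩
  have := main (n - 2) le_rfl
  have := ZMod.val_lt (r t0 - q t0)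
  omega

lemma meetsWithin_symm {n R : ℕ} {p q : ℕ → ZMod n} (h : meetsWithin n R p q) :
    meetsWithin n R q p := by
  rcases h with ⟨t, h, h'⟩ | ⟨t, h, h1, h2, h3⟩
  · exact Or.inl ⟨t, h, h'.symm⟩
  · exact Or.inr ⟨t, h, h2, h1, h3.symm⟩

lemma core_true (n : ℕ) (hn : 3 ≤ n) (R t0 : ℕ) (e : ℕ → Option (ZMod n)) (p q r : ℕ → ZMod n)
    (hR : t0 + (n - 2) ≤ R)
    (hp : ∀ t, t0 ≤ t → t < t0 + (n - 2) → p (t + 1) = ringStep n (e t) true (p t))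
    (hq : ∀ t, t0 ≤ t → t < t0 + (n - 2) → q (t + 1) = ringStep n (e t) true (q t))
    (hr : ∀ t, t0 ≤ t → t < t0 + (n - 2) → r (t + 1) = ringStep n (e t) false (r t)) :
    meetsWithin n R p q ∨ meetsWithin n R p r ∨ meetsWithin n R q r := by
  have : NeZero n := ⟨by omega⟩
  by_cases a1 : p t0 = r t0
  · exact Or.inr (Or.inl (Or.inl ⟨t0, by omega, a1⟩))
  by_cases a2 : q t0 = r t0
  · exact Or.inr (Or.inr (Or.inl ⟨t0, by omega, a2⟩))
  have z1 : 0 < (r t0 - p t0).val := by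
    rw [ZMod.val_pos, sub_ne_zero]; exact fun h => a1 h.symm
  have z2 : 0 < (r t0 - q t0).val := by
    rw [ZMod.val_pos, sub_ne_zero]; exact fun h => a2 h.symm
  rcases lt_trichotomy (r t0 - p t0).val (r t0 - q t0).val with h | h | h
  · exact core_lt n hn R t0 e p q r hR hp hq hr z1 h
  · have := ZMod.val_injective n h
    exact Or.inl (Or.inl ⟨t0, by omega, by simpa using this⟩)
  · rcases core_lt n hn R t0 e q p r hR hq hp hr z2 h with h | h | h
    · exact Or.inl (meetsWithin_symm h)
    · exact Or.inr (Or.inr h)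
    · exact Or.inr (Or.inl h)

lemma meetsWithin_neg {n R : ℕ} {p q : ℕ → ZMod n}
    (h : meetsWithin n R (fun t => - p t) (fun t => - q t)) : meetsWithin n R p q := by
  simpa [meetsWithin] using h

lemma core (n : ℕ) (hn : 3 ≤ n) (R t0 : ℕ) (e : ℕ → Option (ZMod n)) (p q r : ℕ → ZMod n)
    (hR : t0 + (n - 2) ≤ R) (δ : Bool)
    (hp : ∀ t, t0 ≤ t → t < t0 + (n - 2) → p (t + 1) = ringStep n (e t) δ (p t))
    (hq : ∀ t, t0 ≤ t → t < t0 + (n - 2) → q (t + 1) = ringStep n (e t) δ (q t))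
    (hr : ∀ t, t0 ≤ t → t < t0 + (n - 2) → r (t + 1) = ringStep n (e t) (!δ) (r t)) :
    meetsWithin n R p q ∨ meetsWithin n R p r ∨ meetsWithin n R q r := by
  cases δ with
  | true => exact core_true n hn R t0 e p q r hR hp hq hr
  | false =>
    have := core_true n hn R t0 (fun t => (e t).map (fun i => -i - 1)) (fun t => - p t)
      (fun t => - q t) (fun t => - r t) hR
      (fun t h h' => by rw [hp t h h', ← ringStep_neg]; rfl)
      (fun t h h' => by rw [hq t h h', ← ringStep_neg]; rfl)
      (fun t h h' => by rw [hr t h h', ← ringStep_neg]; rfl)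
    exact this.imp meetsWithin_neg (Or.imp meetsWithin_neg meetsWithin_neg)

/-- Some bit index sees two different directions. -/
lemma exists_split (k : ℕ) (b₁ b₂ b₃ : Fin k → Bool)
    (h12 : b₁ ≠ b₂) (h13 : b₁ ≠ b₃) (h23 : b₂ ≠ b₃) (s₁ s₂ s₃ : Bool) :
    ∃ i, ¬ (xor s₁ (b₁ i) = xor s₂ (b₂ i) ∧ xor s₁ (b₁ i) = xor s₃ (b₃ i)) := by
  by_contra! h
  have a12 : s₁ = s₂ → False := by
    rintro rfl
    exact h12 (funext fun i => by simpa using (h i).1)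
  have a13 : s₁ = s₃ → False := by
    rintro rfl
    exact h13 (funext fun i => by simpa using (h i).2)
  have a23 : s₂ = s₃ → False := by
    rintro rfl
    exact h23 (funext fun i => by simpa using (h i).1.symm.trans (h i).2)
  revert a12 a13 a23
  cases s₁ <;> cases s₂ <;> cases s₃ <;> simp

/-- A long enough phase congruent to `i` that starts early enough. -/
lemma exists_phase (n : ℕ) (hn : 3 ≤ n) (k : ℕ) (i : Fin k) :
    ∃ t, t % k = i ∧ n - 2 ≤ 2 ^ t ∧ 2 ^ t ≤ n * 2 ^ k := by
  have hk : 0 < k := i.pos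
  obtain ⟨T, hT1, hT2⟩ : ∃ T, n - 2 ≤ 2 ^ T ∧ 2 ^ T ≤ 2 * n := by
    refine ⟨Nat.clog 2 (n - 2), Nat.le_pow_clog (by omega) _, ?_⟩
    by_cases h : n - 2 ≤ 1
    · rw [Nat.clog_of_right_le_one h]; simp; omega
    · have h3 := Nat.pow_pred_clog_lt_self (b := 2) (by omega) (x := n - 2) (by omega)
      have h4 : 0 < Nat.clog 2 (n - 2) := Nat.clog_pos (by omega) (by omega)
      obtain ⟨c, hc⟩ : ∃ c, Nat.clog 2 (n - 2) = c + 1 := ⟨_, (Nat.succ_pred_eq_of_pos h4).symm⟩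
      rw [hc] at h3 ⊢
      simp only [Nat.pred_succ] at h3
      rw [pow_succ]
      omega
  obtain ⟨m, hm, hmod⟩ : ∃ m, m < k ∧ (T + m) % k = i := by
    have hi := i.isLt
    have hTk := Nat.mod_lt T hk
    by_cases h : T % k ≤ i
    · refine ⟨i - T % k, by omega, ?_⟩
      rw [Nat.add_mod, Nat.mod_eq_of_lt (a := i - T % k) (by omega)]
      rw [Nat.add_sub_cancel' h, Nat.mod_eq_of_lt hi]
    · refine ⟨k + i - T % k, by omega, ?_⟩
      rw [Nat.add_mod, Nat.mod_eq_of_lt (a := k + i - T % k) (by omega)]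
      rw [Nat.add_sub_cancel' (by omega), Nat.add_mod_left, Nat.mod_eq_of_lt hi]
  refine ⟨T + m, hmod, hT1.trans (Nat.pow_le_pow_right (by omega) (by omega)), ?_⟩
  obtain ⟨k', rfl⟩ : ∃ k', k = k' + 1 := ⟨k - 1, by omega⟩
  calc 2 ^ (T + m) ≤ 2 ^ (T + k') := Nat.pow_le_pow_right (by omega) (by omega)
    _ = 2 ^ T * 2 ^ k' := pow_add _ _ _
    _ ≤ (2 * n) * 2 ^ k' := Nat.mul_le_mul_right _ hT2
    _ = n * 2 ^ (k' + 1) := by ring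

/-- Lemma 4 (lem:lruntime): in Stage 1, where robot `j`'s direction in phase `i` is
determined by bit `i mod k` of its ID xor-ed with its chirality, for every adversary some
two of the three robots (whose IDs are pairwise distinct) meet within `n + n·2^k`
rounds. -/
theorem stage1_two_meet (n : ℕ) (hn : 3 ≤ n) (k : ℕ) (hk : 0 < k)
    (b₁ b₂ b₃ : Fin k → Bool)
    (h12 : b₁ ≠ b₂) (h13 : b₁ ≠ b₃) (h23 : b₂ ≠ b₃)
    (s₁ s₂ s₃ : Bool) (v₁ v₂ v₃ : ZMod n)
    (e : ℕ → Option (ZMod n)) :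
    meetsWithin n (n + n * 2 ^ k)
        (ringPos n e (stage1Dir k hk b₁ s₁) v₁)
        (ringPos n e (stage1Dir k hk b₂ s₂) v₂) ∨
    meetsWithin n (n + n * 2 ^ k)
        (ringPos n e (stage1Dir k hk b₁ s₁) v₁)
        (ringPos n e (stage1Dir k hk b₃ s₃) v₃) ∨
    meetsWithin n (n + n * 2 ^ k)
        (ringPos n e (stage1Dir k hk b₂ s₂) v₂)
        (ringPos n e (stage1Dir k hk b₃ s₃) v₃) := by
  obtain ⟨i, hi⟩ := exists_split k b₁ b₂ b₃ h12 h13 h23 s₁ s₂ s₃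
  obtain ⟨T, hT, hlen, hle⟩ := exists_phase n hn k i
  have hpos : 0 < 2 ^ T := by positivity
  have hdir : ∀ (b : Fin k → Bool) (s : Bool) (v : ZMod n) (t : ℕ), 2 ^ T - 1 ≤ t →
      t < 2 ^ T - 1 + (n - 2) → ringPos n e (stage1Dir k hk b s) v (t + 1) =
        ringStep n (e t) (!(xor s (b i))) (ringPos n e (stage1Dir k hk b s) v t) := by
    intro b s v t h1 h2
    have hph : stage1Phase t = T := by
      unfold stage1Phase
      rw [Nat.log_eq_iff (Or.inr ⟨by omega, by omega⟩), pow_succ]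
      omega
    have : stage1Dir k hk b s t = !(xor s (b i)) := by
      unfold stage1Dir
      congr 3
      apply Fin.ext
      simp [hph, hT]
    rw [ringPos, this]
  have d1 := hdir b₁ s₁ v₁
  have d2 := hdir b₂ s₂ v₂
  have d3 := hdir b₃ s₃ v₃
  have hR : 2 ^ T - 1 + (n - 2) ≤ n + n * 2 ^ k := by omega
  revert d1 d2 d3 hi
  generalize xor s₁ (b₁ i) = x₁
  generalize xor s₂ (b₂ i) = x₂
  generalize xor s₃ (b₃ i) = x₃
  intro hi d1 d2 d3
  by_cases c12 : x₁ = x₂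
  · subst c12
    have : x₃ = !x₁ := by revert hi; cases x₁ <;> cases x₃ <;> simp
    subst this
    exact core n hn _ _ e _ _ _ hR (!x₁) d1 d2 d3
  · have h2 : x₂ = !x₁ := by revert c12; cases x₁ <;> cases x₂ <;> simp
    subst h2
    by_cases c13 : x₁ = x₃
    · subst c13
      rcases core n hn _ _ e _ _ _ hR (!x₁) d1 d3 d2 with h | h | h
      · exact Or.inr (Or.inl h)
      · exact Or.inl h
      · exact Or.inr (Or.inr (meetsWithin_symm h))
    · have h3 : x₃ = !x₁ := by revert c13; cases x₁ <;> cases x₃ <;> simp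
      subst h3
      rcases core n hn _ _ e _ _ _ hR (!(!x₁)) d2 d3 (by simpa using d1) with h | h | h
      · exact Or.inr (Or.inr h)
      · exact Or.inl (meetsWithin_symm h)
      · exact Or.inr (Or.inl (meetsWithin_symm h))
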